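/- Fix k ≥ 1. The average of H(A) over all A ∈ L_n^k, multiplied by n^{-k/(k+1)}, has liminf at least k^{k/(k+1)}/(k+1) as n → ∞; i.e., liminf_{n→∞} n^{-k/(k+1)} · (1/|L_n^k|) · Σ_{A ∈ L_n^k} H(A) ≥ k^{k/(k+1)}/(k+1). (In particular this liminf is at least 1 − (ln k + 1)/(k+1).) -/

import Mathlib

open scoped Classical

/-- `A : [n]^{k+1} → {0,1}` is an order-`n` `k`-dimensional permutation if every
line (obtained by fixing all coordinates but one) contains exactly one `1`. -/
def IsHDPerm (n k : ℕ) (A : (Fin (k + 1) → Fin n) → Bool) : Prop :=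
  ∀ (j : Fin (k + 1)) (x : Fin (k + 1) → Fin n),
    ∃! t : Fin n, A (Function.update x j t) = true

/-- `L_n^k`: the finite set of order-`n` `k`-dimensional permutations. -/
noncomputable def HDPerms (n k : ℕ) : Finset ((Fin (k + 1) → Fin n) → Bool) :=
  Finset.univ.filter (fun A => IsHDPerm n k A)

/-- A monotone subsequence of length `m` in `A`: a sequence of `m` support
positions that is strictly monotone (in some direction) in every coordinate. -/
def IsMonoSub (n k m : ℕ) (A : (Fin (k + 1) → Fin n) → Bool)
    (α : Fin m → (Fin (k + 1) → Fin n)) : Prop :=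
  (∀ i, A (α i) = true) ∧
    ∀ j : Fin (k + 1), StrictMono (fun i => α i j) ∨ StrictAnti (fun i => α i j)

/-- `H(A)`: the maximum length of a monotone subsequence of `A`. -/
noncomputable def HLen (n k : ℕ) (A : (Fin (k + 1) → Fin n) → Bool) : ℕ :=
  sSup {m : ℕ | ∃ α : Fin m → (Fin (k + 1) → Fin n), IsMonoSub n k m A α}

/-- The strict partial order `<_c` on `[n]^{k+1}` induced by `c ∈ {0,1}^{k+1}`. -/
def cLT {n k : ℕ} (c : Fin (k + 1) → Bool) (x y : Fin (k + 1) → Fin n) : Prop :=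
  ∀ i, if c i then x i < y i else y i < x i

/-- A `<_c`-monotone subsequence of length `m` in `A`: a `<_c`-chain of `m`
support positions. -/
def IsCMonoSub (n k m : ℕ) (c : Fin (k + 1) → Bool)
    (A : (Fin (k + 1) → Fin n) → Bool) (α : Fin m → (Fin (k + 1) → Fin n)) : Prop :=
  (∀ i, A (α i) = true) ∧ ∀ i j : Fin m, i < j → cLT c (α i) (α j)


namespace EL

/-- permute coordinate j0 -/
noncomputable def act {n k : ℕ} (j : Fin (k+1)) (σ : Equiv.Perm (Fin n)) (x : Fin (k+1) → Fin n) :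
    Fin (k+1) → Fin n := Function.update x j (σ (x j))

lemma act_act {n k : ℕ} (j : Fin (k+1)) (σ τ : Equiv.Perm (Fin n)) (x : Fin (k+1) → Fin n) :
    act j σ (act j τ x) = act j (σ * τ) x := by
  simp [act]

lemma act_one {n k : ℕ} (j : Fin (k+1)) (x : Fin (k+1) → Fin n) :
    act j 1 x = x := by
  simp [act]

lemma perm_act {n k : ℕ} (j : Fin (k+1)) (σ : Equiv.Perm (Fin n))
    (A : (Fin (k + 1) → Fin n) → Bool) (hA : IsHDPerm n k A) :
    IsHDPerm n k (fun x => A (act j σ x)) := by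
  intro i x
  by_cases hij : i = j
  · subst hij
    obtain ⟨t, ht, hu⟩ := hA i x
    refine ⟨σ.symm t, by simpa [act] using ht, fun s hs => ?_⟩
    have := hu (σ s) (by simpa [act] using hs)
    simp [← this]
  · obtain ⟨t, ht, hu⟩ := hA i (act j σ x)
    have key : ∀ s, act j σ (Function.update x i s) = Function.update (act j σ x) i s := by
      intro s
      have : (Function.update x i s) j = x j := Function.update_of_ne (Ne.symm hij) _ _
      simp only [act, this]
      exact Function.update_comm hij _ _ _
    refine ⟨t, by simpa [key] using ht, fun s hs => hu s (by simpa [key] using hs)⟩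

/-- number of permutations through a tuple -/
noncomputable def N {n k m : ℕ} (f : Fin m → Fin (k+1) → Fin n) : ℕ :=
  ((HDPerms n k).filter (fun A => ∀ i, A (f i) = true)).card

lemma N_act_le {n k m : ℕ} (f : Fin m → Fin (k+1) → Fin n) (j : Fin (k+1))
    (σ : Equiv.Perm (Fin n)) : N (fun i => act j σ (f i)) ≤ N f := by
  unfold N
  refine Finset.card_le_card_of_injOn (fun A x => A (act j σ x)) ?_ ?_
  · intro A hA
    simp only [HDPerms, Finset.coe_filter, Finset.mem_filter, Finset.mem_univ, true_and,
      Set.mem_ofPred_eq] at hA ⊢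
    exact ⟨perm_act j σ A hA.1, hA.2⟩
  · intro A _ B _ h
    funext x
    have := congrFun h (act j σ⁻¹ x)
    simpa [act_act, act_one] using this

lemma N_act {n k m : ℕ} (f : Fin m → Fin (k+1) → Fin n) (j : Fin (k+1))
    (σ : Equiv.Perm (Fin n)) : N (fun i => act j σ (f i)) = N f := by
  apply le_antisymm (N_act_le f j σ)
  have := N_act_le (fun i => act j σ (f i)) j σ⁻¹
  simpa [act_act, act_one] using this

lemma exists_perm {m n : ℕ} (f g : Fin m → Fin n) (hf : f.Injective) (hg : g.Injective) :
    ∃ σ : Equiv.Perm (Fin n), ∀ i, σ (f i) = g i := by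
  let e : {x // x ∈ Set.range f} ≃ {x // x ∈ Set.range g} :=
    (Equiv.ofInjective f hf).symm.trans (Equiv.ofInjective g hg)
  refine ⟨e.extendSubtype, fun i => ?_⟩
  rw [Equiv.extendSubtype_apply_of_mem e (f i) ⟨i, rfl⟩]
  show ((Equiv.ofInjective g hg) ((Equiv.ofInjective f hf).symm (Equiv.ofInjective f hf i)) : Fin n) = g i
  rw [Equiv.symm_apply_apply]
  rfl

lemma N_update {n k m : ℕ} (f : Fin m → Fin (k+1) → Fin n) (j : Fin (k+1))
    (hf : Function.Injective (fun i => f i j)) (g : Fin m → Fin n) (hg : g.Injective) :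
    N (fun i => Function.update (f i) j (g i)) = N f := by
  obtain ⟨σ, hσ⟩ := exists_perm (fun i => f i j) g hf hg
  rw [← N_act f j σ]
  simp only [act]
  congr 1
  funext i
  rw [← hσ i]

lemma N_mul_le {n k m : ℕ} (f : Fin m → Fin (k+1) → Fin n) (j : Fin (k+1))
    (hf : Function.Injective (fun i => f i j)) :
    N f * n.descFactorial m ≤ (HDPerms n k).card := by
  have h1 : ∑ g : Fin m ↪ Fin n, N (fun i => Function.update (f i) j (g i))
      = N f * n.descFactorial m := by
    rw [Finset.sum_congr rfl (fun (g : Fin m ↪ Fin n) _ => N_update f j hf g g.injective)]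
    simp [Fintype.card_embedding_eq, mul_comm]
  rw [← h1]
  simp only [N, Finset.card_filter]
  rw [Finset.sum_comm]
  rw [Finset.card_eq_sum_ones]
  refine Finset.sum_le_sum fun A hA => ?_
  rw [← Finset.card_filter, Finset.card_le_one]
  intro g hg g' hg'
  simp only [HDPerms, Finset.mem_filter, Finset.mem_univ, true_and] at hA hg hg'
  ext i
  rw [(hA j (f i)).unique (hg i) (hg' i)]

lemma N_one {n k : ℕ} (x : Fin (k+1) → Fin n) :
    N (fun _ : Fin 1 => x) * n = (HDPerms n k).card := by
  have h1 : ∑ t : Fin n, N (fun _ : Fin 1 => Function.update x 0 t)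
      = N (fun _ : Fin 1 => x) * n := by
    rw [Finset.sum_congr rfl (fun t _ => N_update (fun _ : Fin 1 => x) 0
      (Function.injective_of_subsingleton _) (fun _ => t) (Function.injective_of_subsingleton _))]
    simp [mul_comm]
  rw [← h1]
  simp only [N, Finset.card_filter]
  rw [Finset.sum_comm]
  rw [Finset.card_eq_sum_ones]
  refine Finset.sum_congr rfl fun A hA => ?_
  rw [← Finset.card_filter, Finset.card_eq_one]
  simp only [HDPerms, Finset.mem_filter, Finset.mem_univ, true_and] at hA
  obtain ⟨t, ht, hu⟩ := hA 0 x
  refine ⟨t, ?_⟩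
  ext s
  simp only [forall_const, Finset.mem_filter, Finset.mem_univ, true_and, Finset.mem_singleton]
  exact ⟨fun h => hu s h, fun h => h ▸ ht⟩

lemma nonempty {n k : ℕ} (hn : 1 ≤ n) : (HDPerms n k).Nonempty := by
  have : NeZero n := ⟨by omega⟩
  refine ⟨fun x => decide (∑ i, x i = 0), ?_⟩
  simp only [HDPerms, Finset.mem_filter, Finset.mem_univ, true_and]
  intro j x
  simp only [decide_eq_true_eq]
  have key : ∀ t, ∑ i, Function.update x j t i = t + ∑ i ∈ Finset.univ \ {j}, x i := fun t =>
    Finset.sum_update_of_mem (Finset.mem_univ j) x t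
  refine ⟨-∑ i ∈ Finset.univ \ {j}, x i, ?_, fun t ht => ?_⟩
  · simp only [key]; exact neg_add_cancel _
  · simp only [key] at ht; exact eq_neg_of_add_eq_zero_left ht

lemma mono_le {n k m : ℕ} {A : (Fin (k + 1) → Fin n) → Bool} {α : Fin m → Fin (k+1) → Fin n}
    (h : IsMonoSub n k m A α) : m ≤ n := by
  have : Function.Injective (fun i => α i 0) := by
    rcases h.2 0 with h | h
    · exact h.injective
    · exact h.injective
  simpa using Fintype.card_le_of_injective _ this

lemma bdd (n k : ℕ) (A : (Fin (k + 1) → Fin n) → Bool) :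
    BddAbove {m : ℕ | ∃ α : Fin m → (Fin (k + 1) → Fin n), IsMonoSub n k m A α} :=
  ⟨n, fun _ ⟨_, h⟩ => mono_le h⟩

lemma exists_max (n k : ℕ) (A : (Fin (k + 1) → Fin n) → Bool) :
    ∃ α : Fin (HLen n k A) → (Fin (k + 1) → Fin n), IsMonoSub n k (HLen n k A) A α := by
  have : HLen n k A ∈ {m : ℕ | ∃ α : Fin m → (Fin (k + 1) → Fin n), IsMonoSub n k m A α} := by
    apply Nat.sSup_mem _ (bdd n k A)
    exact ⟨0, fun i => i.elim0, fun i => i.elim0, fun j => Or.inl fun i => i.elim0⟩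
  exact this

lemma HLen_ge {n k : ℕ} (A : (Fin (k + 1) → Fin n) → Bool) (s M : ℕ) :
    ((Finset.range M).filter (fun b => ∃ x : Fin (k+1) → Fin n, (∀ j, (x j : ℕ) / s = b)
      ∧ A x = true)).card ≤ HLen n k A := by
  set S := (Finset.range M).filter (fun b => ∃ x : Fin (k+1) → Fin n, (∀ j, (x j : ℕ) / s = b)
      ∧ A x = true) with hS
  have hS' : ∀ b : S, ∃ x : Fin (k+1) → Fin n, (∀ j, (x j : ℕ) / s = b) ∧ A x = true :=
    fun b => (Finset.mem_filter.1 b.2).2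
  choose x hx hA using hS'
  refine le_csSup (bdd n k A) ⟨fun i => x (S.orderIsoOfFin rfl i), fun i => hA _, fun j => Or.inl ?_⟩
  intro a b hab
  have h1 : ((S.orderIsoOfFin rfl a : S) : ℕ) < (S.orderIsoOfFin rfl b : S) := by
    exact_mod_cast (S.orderIsoOfFin rfl).strictMono hab
  rw [← hx _ j, ← hx _ j] at h1
  show (x _ j : Fin n) < _
  rw [Fin.lt_def]
  by_contra hc
  push Not at hc
  exact absurd (Nat.div_le_div_right (c := s) hc) (by omega)

lemma div_iff {a s b : ℕ} (hs : 0 < s) : a / s = b ↔ b * s ≤ a ∧ a < (b+1) * s := by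
  rw [← Nat.le_div_iff_mul_le hs, ← Nat.div_lt_iff_lt_mul hs]; omega

/-- the block -/
noncomputable def Q (n k s b : ℕ) : Finset (Fin (k+1) → Fin n) :=
  Fintype.piFinset (fun _ => Finset.univ.filter (fun t : Fin n => (t : ℕ) / s = b))

lemma card_Q {n k s b : ℕ} (hs : 0 < s) (h : (b + 1) * s ≤ n) : (Q n k s b).card = s ^ (k+1) := by
  have : (Finset.univ.filter (fun t : Fin n => (t : ℕ) / s = b)).card = s := by
    rw [← Finset.card_map Fin.valEmbedding]
    have : (Finset.univ.filter (fun t : Fin n => (t : ℕ) / s = b)).map Fin.valEmbedding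
        = Finset.Ico (b * s) ((b+1) * s) := by
      ext t
      simp only [Finset.mem_map, Finset.mem_filter, Finset.mem_univ, true_and, Finset.mem_Ico,
        Fin.valEmbedding_apply]
      constructor
      · rintro ⟨a, ha, rfl⟩
        rwa [div_iff hs] at ha
      · rintro ⟨h1, h2⟩
        refine ⟨⟨t, by omega⟩, ?_, rfl⟩
        simp only
        rw [div_iff hs]
        exact ⟨h1, h2⟩
    rw [this, Nat.card_Ico, Nat.add_mul]; omega
  simp [Q, this]

lemma moments {n k : ℕ} (hn : 2 ≤ n) (Q : Finset (Fin (k+1) → Fin n)) (hq : 0 < Q.card) :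
    ((HDPerms n k).card : ℝ) * (((Q.card : ℝ) / n) / (1 + (Q.card : ℝ) / (n - 1))) ≤
      ((HDPerms n k).filter (fun A => ∃ x ∈ Q, A x = true)).card := by
  set L := HDPerms n k with hL
  set q : ℝ := (Q.card : ℝ) with hqd
  have hq0 : 0 < q := by rw [hqd]; exact_mod_cast hq
  have hn1 : (2:ℝ) ≤ n := by exact_mod_cast hn
  have hLp : (0:ℝ) < L.card := by exact_mod_cast (nonempty (k := k) (by omega : 1 ≤ n)).card_pos
  set X : ((Fin (k+1) → Fin n) → Bool) → ℝ := fun A => ∑ x ∈ Q, if A x = true then 1 else 0 with hX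
  have N1 : ∀ x : Fin (k+1) → Fin n, ∑ A ∈ L, (if A x = true then (1:ℝ) else 0) = L.card / n := by
    intro x
    have := N_one x
    rw [eq_div_iff (by positivity), hL, ← this]
    push_cast
    congr 1
    simp [N, hL]
  have N2 : ∀ x y : Fin (k+1) → Fin n, x ≠ y →
      ∑ A ∈ L, ((if A x = true then (1:ℝ) else 0) * (if A y = true then 1 else 0))
        ≤ L.card / (n * (n-1)) := by
    intro x y hxy
    obtain ⟨j, hj⟩ := Function.ne_iff.1 hxy
    have := N_mul_le ![x, y] j (by
      intro a b hab
      fin_cases a <;> fin_cases b <;> simp_all)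
    rw [le_div_iff₀ (by nlinarith)]
    have h2 : ((n.descFactorial 2 : ℕ) : ℝ) = n * (n - 1) := by
      rw [Nat.cast_descFactorial_two]
    rw [← h2]
    refine le_trans (le_of_eq ?_) (by exact_mod_cast this : ((N ![x,y] * n.descFactorial 2 : ℕ) : ℝ) ≤ _)
    push_cast
    congr 1
    simp only [N, Fin.forall_fin_two, Finset.card_filter, ← hL]
    push_cast
    refine Finset.sum_congr rfl fun A _ => ?_
    by_cases h1 : A x = true <;> by_cases h2 : A y = true <;> simp [h1, h2]
  have E1 : ∑ A ∈ L, X A = L.card * (q / n) := by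
    simp only [hX]
    rw [Finset.sum_comm, Finset.sum_congr rfl (fun x _ => N1 x)]
    simp [← hqd]; ring
  have E2 : ∑ A ∈ L, X A ^ 2 ≤ L.card * (q / n) * (1 + q / (n-1)) := by
    have : ∀ A, X A ^ 2 = ∑ x ∈ Q, ∑ y ∈ Q,
        ((if A x = true then (1:ℝ) else 0) * (if A y = true then 1 else 0)) := by
      intro A; rw [sq, Finset.sum_mul_sum]
    simp only [this]
    rw [Finset.sum_comm]
    have : ∀ x ∈ Q, ∑ A ∈ L, ∑ y ∈ Q,
        ((if A x = true then (1:ℝ) else 0) * (if A y = true then 1 else 0))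
        ≤ L.card / n + q * (L.card / (n * (n-1))) := by
      intro x hx
      rw [Finset.sum_comm]
      calc _ ≤ ∑ y ∈ Q, ((if x = y then (L.card / n : ℝ) else 0) + L.card / (n * (n-1))) := by
            refine Finset.sum_le_sum fun y _ => ?_
            have hp : (0:ℝ) ≤ L.card / (n * (n-1)) :=
              div_nonneg hLp.le (mul_nonneg (by linarith) (by linarith))
            by_cases hxy : x = y
            · subst hxy
              rw [if_pos rfl, ← N1 x]
              simp only [← ite_and, mul_ite, mul_one, mul_zero, and_self]
              linarith
            · rw [if_neg hxy, zero_add]; exact N2 x y hxy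
        _ = _ := by
            rw [Finset.sum_add_distrib, Finset.sum_ite_eq, if_pos hx]; simp [← hqd]
    refine (Finset.sum_le_sum this).trans (le_of_eq ?_)
    have : (n:ℝ) - 1 ≠ 0 := by intro h; linarith
    simp [← hqd]
    field_simp
  set P := L.filter (fun A => ∃ x ∈ Q, A x = true) with hP
  have E3 : ∑ A ∈ L, X A = ∑ A ∈ P, X A := by
    symm
    apply Finset.sum_subset (Finset.filter_subset _ _)
    intro A hA hAP
    apply Finset.sum_eq_zero
    intro x hx
    rw [if_neg]
    intro h
    exact hAP (Finset.mem_filter.2 ⟨hA, x, hx, h⟩)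
  have CS : (∑ A ∈ P, X A) ^ 2 ≤ P.card * ∑ A ∈ P, X A ^ 2 := sq_sum_le_card_mul_sum_sq
  have E4 : ∑ A ∈ P, X A ^ 2 ≤ ∑ A ∈ L, X A ^ 2 :=
    Finset.sum_le_sum_of_subset_of_nonneg (Finset.filter_subset _ _) (fun _ _ _ => sq_nonneg _)
  rw [← E3, E1] at CS
  have hB : 0 < 1 + q / ((n:ℝ)-1) := by
    have : 0 ≤ q / ((n:ℝ)-1) := div_nonneg hq0.le (by linarith)
    linarith
  rw [← mul_div_assoc, div_le_iff₀ hB]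
  have h5 : (L.card * (q/n)) ^ 2 ≤ P.card * (L.card * (q / n) * (1 + q / (n-1))) :=
    CS.trans (mul_le_mul_of_nonneg_left (E4.trans E2) (by positivity))
  have hpos : 0 < L.card * (q/n) := by positivity
  nlinarith

lemma sum_lower {n k : ℕ} (hn : 2 ≤ n) (s M : ℕ) (hs : 0 < s) (hM : M * s ≤ n) :
    (M : ℝ) * ((((s:ℝ)^(k+1)) / n) / (1 + ((s:ℝ)^(k+1)) / (n - 1)))
      ≤ (∑ A ∈ HDPerms n k, (HLen n k A : ℝ)) / ((HDPerms n k).card : ℝ) := by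
  have hLp : (0:ℝ) < (HDPerms n k).card := by
    exact_mod_cast (nonempty (k := k) (by omega : 1 ≤ n)).card_pos
  rw [le_div_iff₀ hLp]
  calc _ = ∑ b ∈ Finset.range M, ((HDPerms n k).card : ℝ) *
          ((((s:ℝ)^(k+1)) / n) / (1 + ((s:ℝ)^(k+1)) / (n - 1))) := by simp; ring
    _ ≤ ∑ b ∈ Finset.range M,
        (((HDPerms n k).filter (fun A => ∃ x ∈ Q n k s b, A x = true)).card : ℝ) := by
        refine Finset.sum_le_sum fun b hb => ?_
        have hb' : (b+1) * s ≤ n :=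
          (Nat.mul_le_mul_right s (Finset.mem_range.1 hb)).trans hM
        have hc := card_Q (k := k) hs hb'
        have := moments hn (Q n k s b) (by rw [hc]; positivity)
        rw [hc] at this
        push_cast at this
        exact this
    _ = ∑ A ∈ HDPerms n k, (((Finset.range M).filter (fun b => ∃ x ∈ Q n k s b, A x = true)).card : ℝ) := by
        simp only [Finset.card_filter]
        push_cast
        rw [Finset.sum_comm]
    _ ≤ _ := by
        refine Finset.sum_le_sum fun A _ => ?_
        have := HLen_ge A s M
        simp only [Q, Fintype.mem_piFinset, Finset.mem_filter, Finset.mem_univ, true_and]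
        exact_mod_cast this


lemma card_strictMono (m n : ℕ) :
    (Finset.univ.filter (fun f : Fin m → Fin n => StrictMono f)).card ≤ n.choose m := by
  have : (Finset.powersetCard m (Finset.univ : Finset (Fin n))).card = n.choose m := by simp
  rw [← this]
  refine Finset.card_le_card_of_injOn (fun f => Finset.univ.image f) ?_ ?_
  · intro f hf
    have hf : StrictMono f := by simpa using hf
    simp [Finset.card_image_of_injective _ hf.injective]
  · intro f hf g hg h
    have hf : StrictMono f := by simpa using hf
    have hg : StrictMono g := by simpa using hg
    rw [← hf.range_inj hg]
    have := congrArg (fun s : Finset (Fin n) => (s : Set (Fin n))) h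
    simpa using this

lemma card_strictAnti (m n : ℕ) :
    (Finset.univ.filter (fun f : Fin m → Fin n => StrictAnti f)).card ≤ n.choose m := by
  refine le_trans ?_ (card_strictMono m n)
  refine Finset.card_le_card_of_injOn (fun f i => Fin.rev (f i)) ?_ ?_
  · intro f hf
    have hf : StrictAnti f := by simpa using hf
    have : StrictMono (fun i => Fin.rev (f i)) := fun a b hab => Fin.rev_lt_rev.2 (hf hab)
    simpa using this
  · intro f _ g _ h
    funext i
    exact Fin.rev_injective (congrFun h i)

/-- tuples monotone in every coordinate -/
noncomputable def T (n k m : ℕ) : Finset (Fin m → Fin (k+1) → Fin n) :=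
  Finset.univ.filter (fun α => ∀ j : Fin (k + 1), StrictMono (fun i => α i j) ∨ StrictAnti (fun i => α i j))

lemma card_T (n k m : ℕ) : (T n k m).card ≤ (2 * n.choose m) ^ (k+1) := by
  set D := Finset.univ.filter (fun f : Fin m → Fin n => StrictMono f ∨ StrictAnti f) with hD
  have h1 : D.card ≤ 2 * n.choose m := by
    rw [hD, Finset.filter_or]
    refine (Finset.card_union_le _ _).trans ?_
    rw [two_mul]
    exact add_le_add (card_strictMono m n) (card_strictAnti m n)
  have h2 : (T n k m).card ≤ (Fintype.piFinset (fun _ : Fin (k+1) => D)).card := by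
    refine Finset.card_le_card_of_injOn (fun α j i => α i j) ?_ ?_
    · intro α hα
      simpa [T, hD] using hα
    · intro f _ g _ h
      funext i j
      exact congrFun (congrFun h j) i
  refine h2.trans ?_
  simp only [Fintype.card_piFinset, Finset.prod_const, Finset.card_univ, Fintype.card_fin]
  exact Nat.pow_le_pow_left h1 _

lemma HLen_le {n k m : ℕ} (hm : 1 ≤ m) (A : (Fin (k + 1) → Fin n) → Bool) :
    HLen n k A ≤ m + ((T n k m).filter (fun α => ∀ i, A (α i) = true)).card := by
  obtain ⟨α, h1, h2⟩ := exists_max n k A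
  generalize HLen n k A = h at α h1 h2 ⊢
  suffices h - m ≤ ((T n k m).filter (fun α => ∀ i, A (α i) = true)).card by omega
  have hinj : Function.Injective α := by
    intro a b hab
    have := congrFun hab 0
    rcases h2 0 with h | h
    · exact h.injective this
    · exact h.injective this
  let w : Fin (h - m) → Fin m → Fin h := fun i t => ⟨i + t, by omega⟩
  have hw : ∀ i, StrictMono (w i) := by
    intro i a b hab
    simp only [w, Fin.lt_def] at hab ⊢
    omega
  have : (Finset.univ : Finset (Fin (h-m))).card = h - m := by simp
  rw [← this]
  refine Finset.card_le_card_of_injOn (fun i t => α (w i t)) ?_ ?_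
  · intro i _
    simp only [T, Finset.coe_filter, Finset.mem_filter, Finset.mem_univ, true_and,
      Set.mem_ofPred_eq]
    refine ⟨fun j => ?_, fun t => h1 _⟩
    rcases h2 j with h | h
    · exact Or.inl (h.comp (hw i))
    · exact Or.inr (h.comp_strictMono (hw i))
  · intro a _ b _ hab
    have := hinj (congrFun hab ⟨0, hm⟩)
    simp only [w, Fin.mk.injEq] at this
    ext; omega

lemma sum_upper {n k m : ℕ} (hn : 1 ≤ n) (hm : 1 ≤ m) (hmn : m ≤ n) :
    (∑ A ∈ HDPerms n k, (HLen n k A : ℝ)) / ((HDPerms n k).card : ℝ)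
      ≤ m + 2 ^ (k+1) * ((n:ℝ) ^ m) ^ k / (m.factorial : ℝ) ^ (k+1) := by
  have hLp : (0:ℝ) < (HDPerms n k).card := by
    exact_mod_cast (nonempty (k := k) hn).card_pos
  rw [div_le_iff₀ hLp]
  have hC : (0:ℝ) < n.choose m := by exact_mod_cast Nat.choose_pos hmn
  have hF : (0:ℝ) < m.factorial := by exact_mod_cast Nat.factorial_pos m
  have hD : ((n.descFactorial m : ℕ) : ℝ) = m.factorial * n.choose m := by
    exact_mod_cast Nat.descFactorial_eq_factorial_mul_choose n m
  have hN : ∀ α ∈ T n k m, (N α : ℝ) ≤ (HDPerms n k).card / (m.factorial * n.choose m) := by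
    intro α hα
    have h2 := (Finset.mem_filter.1 hα).2 0
    have := N_mul_le α 0 (by
      rcases h2 with h | h
      · exact h.injective
      · exact h.injective)
    rw [le_div_iff₀ (by positivity), ← hD]
    exact_mod_cast this
  calc ∑ A ∈ HDPerms n k, (HLen n k A : ℝ)
      ≤ ∑ A ∈ HDPerms n k, ((m:ℝ) + ((T n k m).filter (fun α => ∀ i, A (α i) = true)).card) := by
        refine Finset.sum_le_sum fun A _ => ?_
        exact_mod_cast HLen_le hm A
    _ = (HDPerms n k).card * m + ∑ α ∈ T n k m, (N α : ℝ) := by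
        rw [Finset.sum_add_distrib]
        congr 1
        · simp
        · simp only [N, Finset.card_filter]
          push_cast
          rw [Finset.sum_comm]
    _ ≤ (HDPerms n k).card * m +
          (2 * n.choose m) ^ (k+1) * ((HDPerms n k).card / (m.factorial * n.choose m)) := by
        gcongr
        refine (Finset.sum_le_sum hN).trans ?_
        rw [Finset.sum_const, nsmul_eq_mul]
        gcongr
        exact_mod_cast card_T n k m
    _ = (HDPerms n k).card * (m + 2 ^ (k+1) * (n.choose m : ℝ)^k / m.factorial) := by
        rw [mul_pow, pow_succ (n.choose m : ℝ)]
        field_simp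
    _ ≤ (HDPerms n k).card * (m + 2 ^ (k+1) * ((n:ℝ)^m / m.factorial)^k / m.factorial) := by
        gcongr
        exact Nat.choose_le_pow_div m n
    _ = _ := by
        rw [div_pow, pow_succ (m.factorial : ℝ)]
        field_simp

lemma sum_upper' {n k : ℕ} (hn : 1 ≤ n) :
    (∑ A ∈ HDPerms n k, (HLen n k A : ℝ)) / ((HDPerms n k).card : ℝ)
      ≤ Real.exp 1 * (n:ℝ) ^ ((k:ℝ)/(k+1)) + 1 + 2 ^ (k+1) := by
  have hLp : (0:ℝ) < (HDPerms n k).card := by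
    exact_mod_cast (nonempty (k := k) hn).card_pos
  have hn0 : (0:ℝ) < n := by exact_mod_cast hn
  set y : ℝ := (n:ℝ) ^ ((k:ℝ)/(k+1)) with hy
  have hy0 : 0 < y := by positivity
  have hyk : y ^ (k+1) = (n:ℝ)^k := by
    rw [hy, ← Real.rpow_natCast, ← Real.rpow_mul hn0.le, ← Real.rpow_natCast]
    congr 1; push_cast; field_simp
  set m := ⌈Real.exp 1 * y⌉₊ with hmd
  have hm1 : Real.exp 1 * y ≤ m := Nat.le_ceil _
  have hm2 : (m:ℝ) ≤ Real.exp 1 * y + 1 := (Nat.ceil_lt_add_one (by positivity)).le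
  have hm : 1 ≤ m := Nat.ceil_pos.2 (by positivity)
  by_cases hmn : m ≤ n
  · refine (sum_upper hn hm hmn).trans ?_
    have hF : (0:ℝ) < m.factorial := by exact_mod_cast Nat.factorial_pos m
    have h1 : y ^ m ≤ m.factorial := by
      have h2 := Real.pow_div_factorial_le_exp (x := (m:ℝ)) (by positivity) m
      rw [div_le_iff₀ hF] at h2
      have h3 : (Real.exp 1 * y)^m ≤ (m:ℝ)^m := by gcongr
      have h4 : Real.exp (m:ℝ) = Real.exp 1 ^ m := by rw [← Real.exp_nat_mul]; simp
      rw [mul_pow, ← h4] at h3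
      exact le_of_mul_le_mul_left (h3.trans h2) (Real.exp_pos _)
    have h5 : ((n:ℝ)^m)^k ≤ (m.factorial : ℝ)^(k+1) := by
      calc ((n:ℝ)^m)^k = (y^m)^(k+1) := by
            rw [← pow_mul, mul_comm, pow_mul, ← hyk, ← pow_mul, ← pow_mul, mul_comm]
        _ ≤ _ := by gcongr
    have h6 : 2 ^ (k+1) * ((n:ℝ) ^ m) ^ k / (m.factorial : ℝ) ^ (k+1) ≤ 2^(k+1) := by
      rw [div_le_iff₀ (by positivity)]
      gcongr
    linarith
  · rw [div_le_iff₀ hLp]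
    calc ∑ A ∈ HDPerms n k, (HLen n k A : ℝ) ≤ ∑ A ∈ HDPerms n k, (m:ℝ) := by
          refine Finset.sum_le_sum fun A _ => ?_
          obtain ⟨α, h⟩ := exists_max n k A
          have := mono_le h
          exact_mod_cast (by omega : HLen n k A ≤ m)
      _ = m * (HDPerms n k).card := by simp [mul_comm]
      _ ≤ _ := by
        gcongr
        have : (0:ℝ) ≤ 2^(k+1) := by positivity
        linarith


open Filter Topology in
lemma lim_aux (k : ℕ) (hk : 1 ≤ k) :
    Tendsto (fun n : ℕ => (n : ℝ) ^ (-((k : ℝ) / ((k : ℝ) + 1))) *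
      (((n:ℝ) / (⌊((k:ℝ) * n) ^ (1 / ((k:ℝ)+1))⌋₊ : ℝ) - 1) *
        ((((⌊((k:ℝ) * n) ^ (1 / ((k:ℝ)+1))⌋₊ : ℝ)^(k+1)) / n) /
          (1 + ((⌊((k:ℝ) * n) ^ (1 / ((k:ℝ)+1))⌋₊ : ℝ)^(k+1)) / (n - 1))))) atTop
      (𝓝 ((k : ℝ) ^ ((k : ℝ) / ((k : ℝ) + 1)) / ((k : ℝ) + 1))) := by
  have hk0 : (0:ℝ) < k := by exact_mod_cast hk
  set a : ℝ := 1 / ((k:ℝ)+1) with ha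
  have ha0 : 0 < a := by positivity
  have hka : (k:ℝ)/((k:ℝ)+1) = 1 - a := by rw [ha]; field_simp; ring
  have hak : a * ((k+1 : ℕ) : ℝ) = 1 := by rw [ha]; push_cast; field_simp
  set s : ℕ → ℝ := fun n => (⌊((k:ℝ) * n) ^ a⌋₊ : ℝ) with hs
  have hcast : Tendsto (fun n : ℕ => (n:ℝ)) atTop atTop := tendsto_natCast_atTop_atTop
  have hz : Tendsto (fun n : ℕ => ((k:ℝ) * n) ^ a) atTop atTop :=
    (tendsto_rpow_atTop ha0).comp (hcast.const_mul_atTop hk0)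
  have hr : Tendsto (fun n : ℕ => s n / (n:ℝ)^a) atTop (𝓝 ((k:ℝ)^a)) := by
    have h1 := ((tendsto_nat_floor_div_atTop (R := ℝ)).comp hz).mul_const ((k:ℝ)^a)
    rw [one_mul] at h1
    refine h1.congr' ?_
    filter_upwards [eventually_ge_atTop 1] with n hn
    have hn0 : (0:ℝ) < n := by exact_mod_cast hn
    simp only [Function.comp, hs]
    rw [Real.mul_rpow hk0.le hn0.le]
    have := Real.rpow_pos_of_pos hk0 a
    have := Real.rpow_pos_of_pos hn0 a
    field_simp
  have hkap : (k:ℝ)^a ≠ 0 := (Real.rpow_pos_of_pos hk0 a).ne'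
  have hpk : ((k:ℝ)^a)^(k+1) = k := by
    rw [← Real.rpow_natCast, ← Real.rpow_mul hk0.le, hak, Real.rpow_one]
  have hneg : Tendsto (fun n : ℕ => (n:ℝ)^(-((k:ℝ)/((k:ℝ)+1)))) atTop (𝓝 0) :=
    (tendsto_rpow_neg_atTop (by positivity)).comp hcast
  have hone : Tendsto (fun n : ℕ => (1 - (n:ℝ)⁻¹)⁻¹) atTop (𝓝 1) := by
    have := (tendsto_const_nhds (x := (1:ℝ))).sub (tendsto_inv_atTop_zero.comp hcast)
    simpa using this.inv₀ (by norm_num)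
  have hrk := hr.pow (k+1)
  rw [hpk] at hrk
  have hden : (1:ℝ) + k * 1 ≠ 0 := by positivity
  have hall := ((hr.inv₀ hkap).sub hneg).mul
    (hrk.div ((hrk.mul hone).const_add 1) hden)
  have hlim : (((k:ℝ)^a)⁻¹ - 0) * ((k:ℝ) / (1 + k * 1)) =
      (k : ℝ) ^ ((k : ℝ) / ((k : ℝ) + 1)) / ((k : ℝ) + 1) := by
    rw [hka, Real.rpow_sub hk0, Real.rpow_one]
    field_simp
    ring
  rw [hlim] at hall
  refine hall.congr' ?_
  filter_upwards [eventually_ge_atTop 2] with n hn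
  have hn2 : (2:ℝ) ≤ n := by exact_mod_cast hn
  have hn0 : (0:ℝ) < n := by linarith
  have hn1 : (n:ℝ) - 1 ≠ 0 := by intro h; linarith
  have hna : ((n:ℝ)^a)^(k+1) = n := by
    rw [← Real.rpow_natCast, ← Real.rpow_mul hn0.le, hak, Real.rpow_one]
  have e1 : (s n / (n:ℝ)^a)^(k+1) = s n ^(k+1) / n := by rw [div_pow, hna]
  have e2 : s n ^(k+1) / n * (1 - (n:ℝ)⁻¹)⁻¹ = s n^(k+1) / (n-1) := by
    have : 1 - (n:ℝ)⁻¹ = (n-1)/n := by field_simp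
    rw [this]
    field_simp
  have e3 : (s n / (n:ℝ)^a)⁻¹ = (n:ℝ)^(-((k:ℝ)/((k:ℝ)+1))) * (n / s n) := by
    rw [hka, neg_sub, Real.rpow_sub hn0, Real.rpow_one]
    field_simp
  simp only [Pi.div_apply, e1, e2, e3]
  ring

end EL

/-- `liminf_{n → ∞} n^{-k/(k+1)} E[H_n^k] ≥ k^{k/(k+1)} / (k+1)`. -/
theorem expectation_lower (k : ℕ) (hk : 1 ≤ k) :
    (k : ℝ) ^ ((k : ℝ) / ((k : ℝ) + 1)) / ((k : ℝ) + 1) ≤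
      Filter.liminf (fun n : ℕ =>
        (n : ℝ) ^ (-((k : ℝ) / ((k : ℝ) + 1))) *
          ((∑ A ∈ HDPerms n k, (HLen n k A : ℝ)) / ((HDPerms n k).card : ℝ)))
        Filter.atTop := by

  have hk0 : (0:ℝ) < k := by exact_mod_cast hk
  have hlim := EL.lim_aux k hk
  rw [← hlim.liminf_eq]
  refine Filter.liminf_le_liminf ?_ hlim.isBoundedUnder_ge ?_
  · filter_upwards [Filter.eventually_ge_atTop 2] with n hn
    have hn2 : (2:ℝ) ≤ n := by exact_mod_cast hn
    set s := ⌊((k:ℝ) * n) ^ (1 / ((k:ℝ)+1))⌋₊ with hs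
    have hs0 : 0 < s := by
      rw [hs, Nat.floor_pos]
      apply Real.one_le_rpow
      · have : (1:ℝ) ≤ k := by exact_mod_cast hk
        nlinarith
      · positivity
    gcongr
    refine le_trans ?_ (EL.sum_lower hn s (n / s) hs0 (Nat.div_mul_le_self n s))
    have hs0' : (0:ℝ) < s := by exact_mod_cast hs0
    have hpos : 0 ≤ ((((s:ℝ)^(k+1)) / n) / (1 + ((s:ℝ)^(k+1)) / (n - 1))) := by
      have : (0:ℝ) ≤ n - 1 := by linarith
      positivity
    refine mul_le_mul_of_nonneg_right ?_ hpos
    have h1 := Nat.lt_floor_add_one ((n:ℝ) / s)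
    rw [Nat.floor_div_eq_div] at h1
    linarith
  · refine Filter.IsBoundedUnder.isCoboundedUnder_ge ⟨Real.exp 1 + 1 + 2 ^ (k+1), ?_⟩
    rw [Filter.eventually_map]
    filter_upwards [Filter.eventually_ge_atTop 1] with n hn
    have hn1 : (1:ℝ) ≤ n := by exact_mod_cast hn
    have hn0 : (0:ℝ) < n := by linarith
    have h1 := EL.sum_upper' (k := k) hn
    have hy : 1 ≤ (n:ℝ) ^ ((k:ℝ)/((k:ℝ)+1)) := Real.one_le_rpow hn1 (by positivity)
    rw [Real.rpow_neg hn0.le, inv_mul_le_iff₀ (by linarith)]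
    refine h1.trans ?_
    have h2 : (0:ℝ) < 2^(k+1) := by positivity
    nlinarith
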